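/- Suppose x₁ = x₂ = 1, 0 ≤ y₁ < 2b, 0 ≤ y₂ < 2b, and |y₁ − y₂| = b. Then the Sprague–Grundy values of the Lengyel transfer game L(b;1,y₁;1,y₂) are given explicitly by SG(x,y) = (2 if x is odd, 0 if x is even) + (1 if y mod 2b ≥ b, 0 if y mod 2b < b). In particular, the game has horizontal period 2: SG(x+2, y) = SG(x,y) for all (x,y) ∈ ℕ×ℕ. -/

import Mathlib

/-- The minimum excludant of a set of naturals: the least natural number not in the set. -/
noncomputable def mex (S : Set ℕ) : ℕ := sInf {n : ℕ | n ∉ S}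

/-- `SG` is the Sprague–Grundy function of the Lengyel transfer game `L(b; x₁,y₁; x₂,y₂)`:
from `(x,y)` one may move to `(x, y−b)` (when `y ≥ b`), to `(x−x₁, y+y₁)` (when `x ≥ x₁`),
or to `(x−x₂, y+y₂)` (when `x ≥ x₂`), and `SG` satisfies the mex recurrence. -/
def IsLengyelSG (b x1 y1 x2 y2 : ℕ) (SG : ℕ → ℕ → ℕ) : Prop :=
  ∀ x y : ℕ, SG x y = mex
    ((if b ≤ y then ({SG x (y - b)} : Set ℕ) else ∅) ∪
     (if x1 ≤ x then ({SG (x - x1) (y + y1)} : Set ℕ) else ∅) ∪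
     (if x2 ≤ x then ({SG (x - x2) (y + y2)} : Set ℕ) else ∅))

/-!
Cut each coordinate into blocks, of length `w` horizontally (`x₁ = x₂ = w`) and `b` vertically, and
record whether the index of the block is even or odd. The vertical move flips the vertical parity
only. The two horizontal moves flip the horizontal parity and land on opposite vertical parities,
since `y₁` and `y₂` differ by `b` modulo `2b`. The mex recurrence has only one solution, so it
suffices that `2p + q` solves it, where `p` and `q` are the horizontal and vertical parities. The
vertical move has value `2p + (1 - q)` and is available if `q = 1`; the horizontal moves have values
`2(1 - p)` and `2(1 - p) + 1` and are available if `p = 1`. None of these values is `2p + q`, and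
every smaller number is the value of an available move.
-/

theorem mex_eq_of_notMem_of_forall_lt_mem {S : Set ℕ} {n : ℕ} (hn : n ∉ S) (hlt : ∀ m < n, m ∈ S) :
    mex S = n :=
  IsLeast.csInf_eq ⟨hn, fun _ hm => le_of_not_gt fun h => hm (hlt _ h)⟩

theorem isLengyelSG_iff {b x1 y1 x2 y2 : ℕ} {SG : ℕ → ℕ → ℕ} :
    IsLengyelSG b x1 y1 x2 y2 SG ↔ ∀ x y : ℕ, SG x y = mex
      {m | (b ≤ y ∧ m = SG x (y - b)) ∨ (x1 ≤ x ∧ m = SG (x - x1) (y + y1)) ∨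
        (x2 ≤ x ∧ m = SG (x - x2) (y + y2))} := by
  refine forall₂_congr fun x y => ?_
  congr! 2
  ext m
  grind

theorem IsLengyelSG.unique {b x1 y1 x2 y2 : ℕ} {f g : ℕ → ℕ → ℕ} (hb : 0 < b) (hx1 : 0 < x1)
    (hx2 : 0 < x2) (hf : IsLengyelSG b x1 y1 x2 y2 f) (hg : IsLengyelSG b x1 y1 x2 y2 g) :
    f = g := by
  rw [isLengyelSG_iff] at hf hg
  funext x y
  induction x using Nat.strong_induction_on generalizing y with
  | _ x ihx =>
    induction y using Nat.strong_induction_on with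
    | _ y ihy =>
      rw [hf x y, hg x y]
      congr! 3 with m
      refine or_congr (and_congr_right fun h => ?_)
        (or_congr (and_congr_right fun h => ?_) (and_congr_right fun h => ?_))
      · rw [ihy (y - b) (by omega)]
      · rw [ihx (x - x1) (by omega)]
      · rw [ihx (x - x2) (by omega)]

/-- The parity of the index of the block containing `a`, when `ℕ` is cut into consecutive blocks of
length `n`, encoded as `0` or `1`. -/
def blockParity (n a : ℕ) : ℕ := a / n % 2

section blockParity

variable {n a c : ℕ}

theorem blockParity_lt_two : blockParity n a < 2 :=
  Nat.mod_lt _ two_pos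

theorem le_of_blockParity_ne_zero (h : blockParity n a ≠ 0) : n ≤ a := by
  contrapose! h
  rw [blockParity, Nat.div_eq_of_lt h, Nat.zero_mod]

theorem blockParity_add_self (hn : 0 < n) : blockParity n (a + n) = 1 - blockParity n a := by
  rw [blockParity, blockParity, Nat.add_div_right a hn]
  omega

theorem blockParity_sub_self (hn : 0 < n) (h : n ≤ a) :
    blockParity n (a - n) = 1 - blockParity n a := by
  have hflip := blockParity_add_self (a := a - n) hn
  have hlt := blockParity_lt_two (n := n) (a := a - n)
  rw [Nat.sub_add_cancel h] at hflip
  omega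

theorem blockParity_eq_mod_two_mul_div : blockParity n a = a % (2 * n) / n := by
  rw [blockParity, mul_comm, Nat.mod_mul_right_div_self]

theorem blockParity_congr (h : a ≡ c [MOD 2 * n]) : blockParity n a = blockParity n c := by
  rw [blockParity_eq_mod_two_mul_div, blockParity_eq_mod_two_mul_div, h]

theorem blockParity_eq_ite_le_mod (hn : 0 < n) :
    blockParity n a = if n ≤ a % (2 * n) then 1 else 0 := by
  have hlt := blockParity_lt_two (n := n) (a := a)
  have hpos : 0 < blockParity n a ↔ n ≤ a % (2 * n) := by
    rw [blockParity_eq_mod_two_mul_div, Nat.div_pos_iff, and_iff_right hn]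
  split_ifs <;> omega

theorem two_mul_blockParity_eq_ite_odd : 2 * blockParity n a = if Odd (a / n) then 2 else 0 := by
  grind [blockParity]

end blockParity

section EqualHorizontalSteps

variable {b w y1 y2 : ℕ}

theorem blockParity_add_of_add_modEq (hb : 0 < b) (hmod : y1 + b ≡ y2 [MOD 2 * b]) (y : ℕ) :
    blockParity b (y + y2) = 1 - blockParity b (y + y1) := by
  rw [← blockParity_add_self hb, add_assoc]
  exact blockParity_congr (hmod.symm.add_left y)

theorem option_value_blockParity_iff (hb : 0 < b) (hw : 0 < w)
    (hmod : y1 + b ≡ y2 [MOD 2 * b]) (x y m : ℕ) :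
    ((b ≤ y ∧ m = 2 * blockParity w x + blockParity b (y - b)) ∨
      (w ≤ x ∧ m = 2 * blockParity w (x - w) + blockParity b (y + y1)) ∨
      (w ≤ x ∧ m = 2 * blockParity w (x - w) + blockParity b (y + y2))) ↔
    ((b ≤ y ∧ m = 2 * blockParity w x + (1 - blockParity b y)) ∨
      (w ≤ x ∧ (m = 2 * (1 - blockParity w x) ∨ m = 2 * (1 - blockParity w x) + 1))) := by
  rw [← and_or_left, blockParity_add_of_add_modEq hb hmod]
  have hlt := blockParity_lt_two (n := b) (a := y + y1)
  refine or_congr (and_congr_right fun hy => ?_) (and_congr_right fun hx => ?_)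
  · rw [blockParity_sub_self hb hy]
  · rw [blockParity_sub_self hw hx]
    omega

theorem mex_option_values_eq {p q : ℕ} {V H : Prop} (hp : p < 2) (hq : q < 2) (hV : q ≠ 0 → V)
    (hH : p ≠ 0 → H) :
    mex {m | (V ∧ m = 2 * p + (1 - q)) ∨ (H ∧ (m = 2 * (1 - p) ∨ m = 2 * (1 - p) + 1))} =
      2 * p + q := by
  apply mex_eq_of_notMem_of_forall_lt_mem
  · rintro (⟨-, h⟩ | ⟨-, h⟩) <;> omega
  · intro m hm
    obtain ⟨hq0, h⟩ | ⟨hp0, h⟩ : (q ≠ 0 ∧ m = 2 * p + (1 - q)) ∨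
        (p ≠ 0 ∧ (m = 2 * (1 - p) ∨ m = 2 * (1 - p) + 1)) := by omega
    · exact .inl ⟨hV hq0, h⟩
    · exact .inr ⟨hH hp0, h⟩

theorem isLengyelSG_blockParity (hb : 0 < b) (hw : 0 < w) (hmod : y1 + b ≡ y2 [MOD 2 * b]) :
    IsLengyelSG b w y1 w y2 fun x y => 2 * blockParity w x + blockParity b y := by
  refine isLengyelSG_iff.mpr fun x y => ?_
  simp only [option_value_blockParity_iff hb hw hmod]
  exact (mex_option_values_eq blockParity_lt_two blockParity_lt_two
    le_of_blockParity_ne_zero le_of_blockParity_ne_zero).symm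

theorem trivial_case_general (hb : 0 < b) (hw : 0 < w) (hmod : y1 + b ≡ y2 [MOD 2 * b])
    {SG : ℕ → ℕ → ℕ} (hSG : IsLengyelSG b w y1 w y2 SG) :
    (∀ x y : ℕ, SG x y =
      (if Odd (x / w) then 2 else 0) + (if b ≤ y % (2 * b) then 1 else 0)) ∧
    (∀ x y : ℕ, SG (x + 2 * w) y = SG x y) := by
  obtain rfl := hSG.unique hb hw hw (isLengyelSG_blockParity hb hw hmod)
  refine ⟨fun x y => ?_, fun x y => ?_⟩ <;> beta_reduce
  · rw [two_mul_blockParity_eq_ite_odd, blockParity_eq_ite_le_mod hb]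
  · rw [blockParity_congr (n := w) (Nat.add_modEq_right : x + 2 * w ≡ x [MOD 2 * w])]

end EqualHorizontalSteps

theorem add_modEq_two_mul_of_sub_eq_or {b y1 y2 : ℕ}
    (h : (y1 : ℤ) - (y2 : ℤ) = (b : ℤ) ∨ (y2 : ℤ) - (y1 : ℤ) = (b : ℤ)) :
    y1 + b ≡ y2 [MOD 2 * b] := by
  obtain rfl | rfl : y1 = y2 + b ∨ y2 = y1 + b := by omega
  · rw [add_assoc, ← two_mul]
    exact Nat.add_modEq_right
  · rfl

/-- If `x₁ = x₂ = 1`, `y₁, y₂ < 2b` and `|y₁ − y₂| = b`, then the SG-values of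
`L(b;1,y₁;1,y₂)` are given explicitly by
`SG(x,y) = (2 if x odd else 0) + (1 if y mod 2b ≥ b else 0)`;
in particular the horizontal period is `2`. -/
theorem trivial_case (b y1 y2 : ℕ) (hb : 0 < b)
    (hy1 : y1 < 2 * b) (hy2 : y2 < 2 * b)
    (hdiff : (y1 : ℤ) - (y2 : ℤ) = (b : ℤ) ∨ (y2 : ℤ) - (y1 : ℤ) = (b : ℤ))
    (SG : ℕ → ℕ → ℕ) (hSG : IsLengyelSG b 1 y1 1 y2 SG) :
    (∀ x y : ℕ, SG x y =
      (if Odd x then 2 else 0) + (if b ≤ y % (2 * b) then 1 else 0)) ∧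
    (∀ x y : ℕ, SG (x + 2) y = SG x y) := by
  simpa using trivial_case_general hb one_pos (add_modEq_two_mul_of_sub_eq_or hdiff) hSG
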